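/- arXiv:1507.06763 — 6 statements merged into one kernel-verified Lean document; each statement's English description precedes it below -/
import Mathlib

section
/- Let K_d denote the kissing number of ℝ^d. For every database size N, every threshold k ≥ 1, every radius r > 0, and all databases X, X' of size N in ℝ^d with Hamming distance H(X,X') = 1, one has |q_count(X,k,r) − q_count(X',k,r)| ≤ min(N, k·K_d + 1). (Upper bound on the global sensitivity of the outlier-count query.) -/
open Finset
open scoped Classical

noncomputable section

/-- A point of `ℝ^d`. -/
abbrev Pt (d : ℕ) := EuclideanSpace ℝ (Fin d)

/-- Hamming distance between two databases of size `N`: the number of differing records. -/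
def hamming {N d : ℕ} (X X' : Fin N → Pt d) : ℕ :=
  (univ.filter fun i => X i ≠ X' i).card

/-- The degree of record `i` in `X`: the number of other records within distance `r`. -/
def deg {N d : ℕ} (X : Fin N → Pt d) (r : ℝ) (i : Fin N) : ℕ :=
  (univ.filter fun j => j ≠ i ∧ ‖X j - X i‖ ≤ r).card

/-- The number of outlier records: records with fewer than `k` neighbors within radius `r`. -/
def qCount {N d : ℕ} (X : Fin N → Pt d) (k : ℕ) (r : ℝ) : ℕ :=
  (univ.filter fun i => deg X r i < k).card

/-- `K` is the kissing number of `ℝ^c`: the largest `n` for which there exist `n` unit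
vectors with pairwise distances at least `1`. -/
def IsKissingNumber (c K : ℕ) : Prop :=
  IsGreatest {n : ℕ | ∃ y : Fin n → Pt c,
    (∀ i, ‖y i‖ = 1) ∧ ∀ i j, i ≠ j → 1 ≤ ‖y i - y j‖} K

/-- If the side `u - v` of the triangle `0, u, v` is a longest one, then the angle at `0` is at
least `π / 3`, so the normalizations of `u` and `v` are at distance at least `1`. -/
lemma one_le_norm_normalize_sub_normalize {E : Type*} [NormedAddCommGroup E]
    [InnerProductSpace ℝ E] {u v : E} (hu : u ≠ 0) (hv : v ≠ 0)
    (huv : ‖u‖ ≤ ‖u - v‖) (hvu : ‖v‖ ≤ ‖u - v‖) :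
    1 ≤ ‖‖u‖⁻¹ • u - ‖v‖⁻¹ • v‖ := by
  have hu' : 0 < ‖u‖ := norm_pos_iff.2 hu
  have hv' : 0 < ‖v‖ := norm_pos_iff.2 hv
  have hsub := norm_sub_sq_real u v
  have hinner : 2 * inner ℝ u v ≤ ‖u‖ * ‖v‖ := by
    have h₁ : ‖u‖ ^ 2 ≤ ‖u - v‖ ^ 2 := by gcongr
    have h₂ : ‖v‖ ^ 2 ≤ ‖u - v‖ ^ 2 := by gcongr
    rcases le_total ‖u‖ ‖v‖ with h | h <;> nlinarith
  have hunit : ∀ w : E, w ≠ 0 → ‖‖w‖⁻¹ • w‖ = 1 := fun _ => norm_smul_inv_norm (𝕜 := ℝ)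
  have hnorm := norm_sub_sq_real (‖u‖⁻¹ • u) (‖v‖⁻¹ • v)
  rw [real_inner_smul_left, real_inner_smul_right, hunit u hu, hunit v hv] at hnorm
  have hcos : 2 * (‖u‖⁻¹ * (‖v‖⁻¹ * inner ℝ u v)) ≤ 1 := by
    calc 2 * (‖u‖⁻¹ * (‖v‖⁻¹ * inner ℝ u v)) = 2 * inner ℝ u v / (‖u‖ * ‖v‖) := by
          field_simp
      _ ≤ 1 := (div_le_one (by positivity)).2 hinner
  nlinarith [norm_nonneg (‖u‖⁻¹ • u - ‖v‖⁻¹ • v)]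

lemma IsKissingNumber.one_le {d K : ℕ} (hK : IsKissingNumber d K) (hd : 1 ≤ d) : 1 ≤ K :=
  hK.2 ⟨fun _ => EuclideanSpace.single ⟨0, hd⟩ 1, fun _ => by simp,
    fun i j hij => absurd (Subsingleton.elim i j) hij⟩

/-- A closed ball of radius `r` contains at most `K` points with pairwise distances
exceeding `r`. -/
lemma IsKissingNumber.card_le_of_separated {d K : ℕ} (hK : IsKissingNumber d K) (hd : 1 ≤ d)
    {ι : Type*} (S : Finset ι) (Y : ι → Pt d) (c : Pt d) (r : ℝ)
    (hball : ∀ i ∈ S, ‖Y i - c‖ ≤ r)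
    (hsep : ∀ i ∈ S, ∀ j ∈ S, i ≠ j → r < ‖Y i - Y j‖) : S.card ≤ K := by
  by_cases hc : ∃ i ∈ S, Y i = c
  · obtain ⟨i, hi, rfl⟩ := hc
    refine le_trans (card_le_one.2 fun a ha b hb => ?_) (hK.one_le hd)
    have hcenter : ∀ j ∈ S, j = i := fun j hj => by
      by_contra hji
      exact absurd (hball j hj) (not_le.2 (hsep j hj i hi hji))
    rw [hcenter a ha, hcenter b hb]
  · push Not at hc
    let e := S.equivFin.symm
    refine hK.2 ⟨fun n => ‖Y (e n) - c‖⁻¹ • (Y (e n) - c), fun n => ?_, fun m n hmn => ?_⟩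
    · exact norm_smul_inv_norm (𝕜 := ℝ) (sub_ne_zero.2 (hc _ (e n).2))
    · have hlt := hsep _ (e m).2 _ (e n).2 fun h => hmn (e.injective (Subtype.ext h))
      rw [← sub_sub_sub_cancel_right _ _ c] at hlt
      exact one_le_norm_normalize_sub_normalize (sub_ne_zero.2 (hc _ (e m).2))
        (sub_ne_zero.2 (hc _ (e n).2)) ((hball _ (e m).2).trans hlt.le)
        ((hball _ (e n).2).trans hlt.le)

/-- If every closed `r`-ball centred at a point of `A` contains at most `k` points of `A`, then
`A` has an `r`-separated subset of at least `1 / k` of its size. -/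
lemma exists_separated_subset {ι E : Type*} [SeminormedAddCommGroup E] (Y : ι → E) (r : ℝ)
    (hr : 0 ≤ r) (k : ℕ) (A : Finset ι)
    (hA : ∀ a ∈ A, (A.filter fun b => ‖Y b - Y a‖ ≤ r).card ≤ k) :
    ∃ S ⊆ A, (∀ i ∈ S, ∀ j ∈ S, i ≠ j → r < ‖Y i - Y j‖) ∧ A.card ≤ k * S.card := by
  induction A using Finset.strongInduction with
  | H A ih =>
    rcases A.eq_empty_or_nonempty with rfl | ⟨a, ha⟩
    · exact ⟨∅, by simp⟩
    have hsub : (A.filter fun b => ¬ ‖Y b - Y a‖ ≤ r) ⊂ A :=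
      filter_ssubset.2 ⟨a, ha, by simpa using hr⟩
    obtain ⟨S, hSA, hsep, hcard⟩ := ih _ hsub fun b hb =>
      (card_le_card (filter_subset_filter _ hsub.1)).trans (hA b (hsub.1 hb))
    have hfar : ∀ b ∈ S, r < ‖Y b - Y a‖ := fun b hb => not_le.1 (mem_filter.1 (hSA hb)).2
    have haS : a ∉ S := fun h => absurd (hfar a h) (by simpa using hr)
    refine ⟨insert a S, insert_subset ha (hSA.trans hsub.1), ?_, ?_⟩
    · intro i hi j hj hij
      rcases mem_insert.1 hi with rfl | hiS <;> rcases mem_insert.1 hj with rfl | hjS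
      · exact absurd rfl hij
      · rw [norm_sub_rev]
        exact hfar j hjS
      · exact hfar i hiS
      · exact hsep i hiS j hjS hij
    · rw [card_insert_of_notMem haS, mul_add_one,
        ← card_filter_add_card_filter_not (s := A) fun b => ‖Y b - Y a‖ ≤ r]
      have := hA a ha
      omega

/-- Changing the single record `i₀` creates at most `k * K` outliers besides `i₀` itself. -/
lemma qCount_le_qCount_add {d N k K : ℕ} (hd : 1 ≤ d) {r : ℝ} (hr : 0 ≤ r)
    (hK : IsKissingNumber d K) {X X' : Fin N → Pt d} {i₀ : Fin N}
    (hX : ∀ i, i ≠ i₀ → X i = X' i) : qCount X k r ≤ qCount X' k r + (k * K + 1) := by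
  let A := univ.filter fun i => deg X r i < k ∧ ‖X i - X' i₀‖ ≤ r
  have hA : ∀ a ∈ A, (A.filter fun b => ‖X b - X a‖ ≤ r).card ≤ k := by
    intro a ha
    have hdeg : deg X r a < k := (mem_filter.1 ha).2.1
    have hsub : (A.filter fun b => ‖X b - X a‖ ≤ r) ⊆
        insert a (univ.filter fun j => j ≠ a ∧ ‖X j - X a‖ ≤ r) := by
      intro b hb
      by_cases hba : b = a
      · simp [hba]
      · simp [hba, (mem_filter.1 hb).2]
    exact ((card_le_card hsub).trans (card_insert_le _ _)).trans hdeg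
  obtain ⟨S, hSA, hsep, hcard⟩ := exists_separated_subset X r hr k A hA
  have hS : S.card ≤ K :=
    hK.card_le_of_separated hd S X (X' i₀) r (fun i hi => (mem_filter.1 (hSA hi)).2.2) hsep
  have hcover : (univ.filter fun i => deg X r i < k) ⊆
      (univ.filter fun i => deg X' r i < k) ∪ insert i₀ A := by
    intro i hi
    have hdeg : deg X r i < k := (mem_filter.1 hi).2
    by_contra hnot
    simp only [mem_union, mem_insert, mem_filter, mem_univ, true_and, A, not_or, not_and,
      not_lt] at hnot
    obtain ⟨hdeg', hi₀, hfar⟩ := hnot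
    refine absurd (hdeg.trans_le hdeg') (not_lt.2 (card_le_card fun j hj => ?_))
    obtain ⟨hji, hnear⟩ := (mem_filter.1 hj).2
    rw [← hX i hi₀] at hnear
    have hj₀ : j ≠ i₀ := by
      rintro rfl
      exact hfar hdeg (by rwa [norm_sub_rev])
    rw [← hX j hj₀] at hnear
    exact mem_filter.2 ⟨mem_univ _, hji, hnear⟩
  calc qCount X k r ≤ qCount X' k r + (A.card + 1) :=
        ((card_le_card hcover).trans (card_union_le _ _)).trans
          (Nat.add_le_add_left (card_insert_le _ _) _)
    _ ≤ qCount X' k r + (k * K + 1) := by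
        have := Nat.mul_le_mul_left k hS
        omega

lemma qCount_le_size {d N : ℕ} (X : Fin N → Pt d) (k : ℕ) (r : ℝ) : qCount X k r ≤ N :=
  (card_le_univ _).trans_eq (Fintype.card_fin N)

/-- Upper bound on the global sensitivity of the outlier-count query:
`|q_count(X,k,r) − q_count(X',k,r)| ≤ min(N, k·K_d + 1)` for neighboring databases. -/
theorem global_sensitivity_upper_bound
    (d N k K : ℕ) (hd : 1 ≤ d) (hk : 1 ≤ k) (r : ℝ) (hr : 0 < r)
    (hK : IsKissingNumber d K)
    (X X' : Fin N → Pt d) (hH : hamming X X' = 1) :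
    |(qCount X k r : ℤ) - (qCount X' k r : ℤ)| ≤ min (N : ℤ) (k * K + 1) := by
  obtain ⟨i₀, hi₀⟩ := card_eq_one.1 hH
  have hX : ∀ i, i ≠ i₀ → X i = X' i := fun i hi => by
    by_contra hne
    exact hi (mem_singleton.1 (hi₀ ▸ mem_filter.2 ⟨mem_univ _, hne⟩))
  have h₁ := qCount_le_qCount_add (k := k) hd hr.le hK hX
  have h₂ := qCount_le_qCount_add (k := k) hd hr.le hK fun i hi => (hX i hi).symm
  have h₃ := qCount_le_size X k r
  have h₄ := qCount_le_size X' k r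
  rw [le_min_iff, abs_le, abs_le]
  zify at h₁ h₂ h₃ h₄
  exact ⟨⟨by linarith, by linarith⟩, by linarith, by linarith⟩
end
end

section
/- For every dimension d ≥ 1, threshold k ≥ 1, radius r > 0, and every database size N ≥ 2dk + 1, there exist databases X, X' of size N in ℝ^d with Hamming distance H(X,X') = 1 such that |q_count(X,k,r) − q_count(X',k,r)| ≥ 2dk + 1. (Lower bound on the global sensitivity of the outlier-count query.) -/
open Finset
open scoped Classical

noncomputable section

/-- The vertex `±r eₐ` of the cross-polytope of radius `r`. -/
def crossVertex {d : ℕ} (r : ℝ) (a : Fin d) (b : Bool) : Pt d :=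
  EuclideanSpace.single a (if b then r else -r)

theorem norm_crossVertex {d : ℕ} {r : ℝ} (hr : 0 < r) (a : Fin d) (b : Bool) :
    ‖crossVertex r a b‖ = r := by
  cases b <;> simp [crossVertex, abs_of_pos hr]

theorem lt_norm_crossVertex_sub {d : ℕ} {r : ℝ} (hr : 0 < r) {a a' : Fin d} {b b' : Bool}
    (h : ¬(a = a' ∧ b = b')) : r < ‖crossVertex r a b - crossVertex r a' b'‖ := by
  by_cases ha : a = a'
  · subst ha
    have hb : b ≠ b' := fun hb => h ⟨rfl, hb⟩
    have key : 2 * r ≤ ‖crossVertex r a b - crossVertex r a b'‖ := by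
      refine le_trans ?_ (PiLp.norm_apply_le (crossVertex r a b - crossVertex r a b') a)
      rw [Real.norm_eq_abs]
      cases b <;> cases b' <;> simp [crossVertex] at hb ⊢
      · rw [abs_of_neg (by linarith)]; linarith
      · rw [abs_of_pos (by linarith)]; linarith
    linarith
  · have hinner : inner ℝ (crossVertex r a b) (crossVertex r a' b') = 0 := by
      simp [crossVertex, EuclideanSpace.inner_single_left, ha]
    have hsq := norm_sub_sq_real (crossVertex r a b) (crossVertex r a' b')
    rw [hinner, norm_crossVertex hr, norm_crossVertex hr] at hsq
    refine lt_of_pow_lt_pow_left₀ 2 (norm_nonneg _) ?_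
    nlinarith

/-- The `i`-th record of a database with `k` records at each vertex of the cross-polytope of
radius `r`, then one record at `q`, and all remaining records at `p`. -/
def crossRecord {d : ℕ} (hd : 0 < d) (k : ℕ) (r : ℝ) (p q : Pt d) (i : ℕ) : Pt d :=
  if i < 2 * d * k then crossVertex r ⟨i / k % d, Nat.mod_lt _ hd⟩ (decide (i / k / d = 0))
  else if i = 2 * d * k then q else p

theorem crossRecord_center {d : ℕ} (hd : 0 < d) (k : ℕ) (r : ℝ) (p q : Pt d) :
    crossRecord hd k r p q (2 * d * k) = q := by
  simp [crossRecord]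

theorem crossRecord_of_ne {d : ℕ} (hd : 0 < d) (k : ℕ) (r : ℝ) (p q q' : Pt d) {i : ℕ}
    (hi : i ≠ 2 * d * k) : crossRecord hd k r p q i = crossRecord hd k r p q' i := by
  simp [crossRecord, hi]

theorem crossRecord_of_gt {d : ℕ} (hd : 0 < d) (k : ℕ) (r : ℝ) (p q : Pt d) {i : ℕ}
    (hi : 2 * d * k < i) : crossRecord hd k r p q i = p := by
  simp [crossRecord, hi.ne', hi.le]

theorem norm_crossRecord {d : ℕ} (hd : 0 < d) (k : ℕ) {r : ℝ} (hr : 0 < r) (p q : Pt d) {i : ℕ}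
    (hi : i < 2 * d * k) : ‖crossRecord hd k r p q i‖ = r := by
  simp [crossRecord, hi, norm_crossVertex hr]

theorem crossRecord_eq_of_div_eq {d : ℕ} (hd : 0 < d) (k : ℕ) (r : ℝ) (p q : Pt d) {i j : ℕ}
    (hi : i < 2 * d * k) (hj : j < 2 * d * k) (h : j / k = i / k) :
    crossRecord hd k r p q j = crossRecord hd k r p q i := by
  simp [crossRecord, hi, hj, h]

theorem lt_norm_crossRecord_sub {d : ℕ} (hd : 0 < d) (k : ℕ) {r : ℝ} (hr : 0 < r) (p q : Pt d)
    {i j : ℕ} (hi : i < 2 * d * k) (hj : j < 2 * d * k) (h : j / k ≠ i / k) :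
    r < ‖crossRecord hd k r p q j - crossRecord hd k r p q i‖ := by
  have quot_lt : ∀ {m : ℕ}, m < 2 * d * k → m / k / d < 2 := fun hm => by
    rw [Nat.div_lt_iff_lt_mul hd]
    exact Nat.div_lt_of_lt_mul (by linarith)
  simp only [crossRecord, hi, hj, if_true]
  refine lt_norm_crossVertex_sub hr fun ⟨hmod, hdiv⟩ => h ?_
  have hmod' : j / k % d = i / k % d := by simpa using hmod
  have hdiv' : j / k / d = i / k / d := by
    have h1 := quot_lt hi
    have h2 := quot_lt hj
    have h3 : j / k / d = 0 ↔ i / k / d = 0 := decide_eq_decide.mp hdiv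
    generalize i / k / d = u at *
    generalize j / k / d = v at *
    omega
  rw [← Nat.div_add_mod (j / k) d, hmod', hdiv', Nat.div_add_mod]

theorem card_filter_div_eq {N k c : ℕ} (hk : 0 < k) (hc : (c + 1) * k ≤ N) :
    (univ.filter fun j : Fin N => j.val / k = c).card = k := by
  have himage : (univ.filter fun j : Fin N => j.val / k = c).image Fin.val
      = Finset.Ico (c * k) ((c + 1) * k) := by
    ext m
    simp only [mem_image, mem_filter, mem_univ, true_and, Finset.mem_Ico]
    have hdiv : m / k = c ↔ c * k ≤ m ∧ m < (c + 1) * k := by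
      rw [← Nat.le_div_iff_mul_le hk, ← Nat.div_lt_iff_lt_mul hk]
      omega
    rw [← hdiv]
    refine ⟨fun ⟨j, hj, hjm⟩ => hjm ▸ hj, fun hm => ⟨⟨m, ?_⟩, hm, rfl⟩⟩
    exact (hdiv.mp hm).2.trans_le hc
  rw [← Finset.card_image_of_injective _ Fin.val_injective, himage, Nat.card_Ico]
  rw [Nat.succ_mul]; omega

/-- Lower bound on the global sensitivity of the outlier-count query: there exist
neighboring databases whose outlier counts differ by at least `2dk + 1`. -/
theorem global_sensitivity_lower_bound
    (d N k : ℕ) (hd : 1 ≤ d) (hk : 1 ≤ k) (r : ℝ) (hr : 0 < r)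
    (hN : 2 * d * k + 1 ≤ N) :
    ∃ X X' : Fin N → Pt d, hamming X X' = 1 ∧
      (2 * d * k + 1 : ℤ) ≤ |(qCount X k r : ℤ) - (qCount X' k r : ℤ)| := by
  have hd' : 0 < d := hd
  set M := 2 * d * k with hM
  let p : Pt d := EuclideanSpace.single ⟨0, hd'⟩ (10 * r)
  let q : Pt d := EuclideanSpace.single ⟨0, hd'⟩ (20 * r)
  have hp : ‖p‖ = 10 * r := by simp [p, abs_of_pos hr]
  have hq : ‖q‖ = 20 * r := by simp [q, abs_of_pos hr]
  let X : Fin N → Pt d := fun i => crossRecord hd' k r p q i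
  let X' : Fin N → Pt d := fun i => crossRecord hd' k r p 0 i
  let z : Fin N := ⟨M, hN⟩
  have hXz : X z = q := crossRecord_center hd' k r p q
  have hXz' : X' z = 0 := crossRecord_center hd' k r p 0
  have hXX' : ∀ i, i ≠ z → X i = X' i := fun i hi =>
    crossRecord_of_ne hd' k r p q 0 fun h => hi (Fin.ext h)
  have hXp : ∀ i : Fin N, M < i.val → X i = p := fun i hi => crossRecord_of_gt hd' k r p q hi
  have hXr : ∀ i : Fin N, i.val < M → ‖X i‖ = r := fun i hi => norm_crossRecord hd' k hr p q hi
  -- In `X` the record `z` is isolated.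
  have hfar : ∀ j, j ≠ z → r < ‖q - X j‖ := by
    intro j hj
    have h := norm_sub_norm_le q (X j)
    have hXj : ‖X j‖ ≤ 10 * r := by
      rcases lt_trichotomy j.val M with h1 | h1 | h1
      · rw [hXr j h1]; linarith
      · exact absurd (Fin.ext h1) hj
      · rw [hXp j h1, hp]
    rw [hq] at h
    linarith
  have hblock : ∀ i : Fin N, i.val < M →
      (univ.filter fun j : Fin N => j.val / k = i.val / k).card = k := by
    intro i hi
    refine card_filter_div_eq hk (le_trans ?_ (Nat.le_of_succ_le hN))
    exact Nat.mul_le_mul_right k (Nat.div_lt_of_lt_mul (by linarith))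
  have hblock_lt : ∀ i j : Fin N, i.val < M → j.val / k = i.val / k → j.val < M := by
    intro i j hi h
    rw [hM, ← Nat.div_lt_iff_lt_mul hk] at hi ⊢
    omega
  have hnear : ∀ i j : Fin N, i.val < M → j.val / k = i.val / k → X' j = X' i :=
    fun i j hi h => crossRecord_eq_of_div_eq hd' k r p 0 hi (hblock_lt i j hi h) h
  have hXr' : ∀ i : Fin N, i.val < M → ‖X' i‖ = r := fun i hi => norm_crossRecord hd' k hr p 0 hi
  have hout : ∀ i : Fin N, i.val ≤ M → deg X r i < k := by
    intro i hi
    rcases hi.lt_or_eq with hi | hi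
    · have hmem : i ∈ univ.filter fun j : Fin N => j.val / k = i.val / k := by simp
      refine lt_of_le_of_lt (Finset.card_le_card ?_)
        ((Finset.card_erase_lt_of_mem hmem).trans_eq (hblock i hi))
      intro j hj
      simp only [mem_filter, mem_univ, true_and, mem_erase] at hj ⊢
      refine ⟨hj.1, ?_⟩
      by_contra hne
      refine absurd hj.2 (not_le.mpr ?_)
      rcases lt_trichotomy j.val M with h1 | h1 | h1
      · exact lt_norm_crossRecord_sub hd' k hr p q hi h1 hne
      · rw [show j = z from Fin.ext h1, hXz]
        exact hfar i fun h => hi.ne (congrArg Fin.val h)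
      · have h := norm_sub_norm_le p (X i)
        rw [hXp j h1]
        rw [hp, hXr i hi] at h
        linarith
    · obtain rfl : i = z := Fin.ext hi
      have hzero : deg X r z = 0 := by
        rw [deg, Finset.card_eq_zero, Finset.filter_eq_empty_iff]
        rintro j - ⟨hj, hle⟩
        rw [hXz, norm_sub_rev] at hle
        exact absurd hle (not_le.mpr (hfar j hj))
      omega
  have hin : ∀ i : Fin N, i.val ≤ M → k ≤ deg X' r i := by
    intro i hi
    rcases hi.lt_or_eq with hi | hi
    · set B := univ.filter fun j : Fin N => j.val / k = i.val / k with hB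
      have hmem : i ∈ B := by simp [hB]
      have hz : z ∉ B.erase i := by
        simp only [hB, mem_filter, mem_univ, true_and, mem_erase]
        exact fun h => (hblock_lt i z hi h.2).ne rfl
      have hcard : (insert z (B.erase i)).card = k := by
        rw [Finset.card_insert_of_notMem hz, Finset.card_erase_add_one hmem, hblock i hi]
      rw [← hcard]
      refine Finset.card_le_card fun j hj => ?_
      simp only [mem_filter, mem_univ, true_and]
      rcases Finset.mem_insert.mp hj with rfl | hj
      · exact ⟨fun h => hi.ne (congrArg Fin.val h).symm, by simp [hXz', hXr' i hi]⟩
      · simp only [hB, mem_erase, mem_filter, mem_univ, true_and] at hj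
        exact ⟨hj.1, by simp [hnear i j hi hj.2, hr.le]⟩
    · obtain rfl : i = z := Fin.ext hi
      have hMpos : 0 < M := by positivity
      let o : Fin N := ⟨0, by omega⟩
      rw [← hblock o hMpos]
      refine Finset.card_le_card fun j hj => ?_
      simp only [mem_filter, mem_univ, true_and] at hj ⊢
      have hjM := hblock_lt o j hMpos hj
      exact ⟨fun h => hjM.ne (congrArg Fin.val h), by simp [hXz', hXr' j hjM]⟩
  have hmono : ∀ i : Fin N, M < i.val → deg X r i ≤ deg X' r i := by
    intro i hi
    have hiz : i ≠ z := fun h => hi.ne' (congrArg Fin.val h)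
    refine Finset.card_le_card fun j hj => ?_
    simp only [mem_filter, mem_univ, true_and] at hj ⊢
    refine ⟨hj.1, ?_⟩
    by_cases hjz : j = z
    · subst hjz
      rw [hXz] at hj
      exact absurd hj.2 (not_le.mpr (hfar i hiz))
    · rw [← hXX' j hjz, ← hXX' i hiz]
      exact hj.2
  have hle_card : (univ.filter fun i : Fin N => i.val ≤ M).card = M + 1 := by
    have h := card_filter_div_eq (N := N) (k := M + 1) (c := 0) (Nat.succ_pos M) (by simpa using hN)
    simpa [Nat.div_eq_zero_iff, Nat.lt_succ_iff] using h
  have hdisj : Disjoint (univ.filter fun i : Fin N => i.val ≤ M)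
      (univ.filter fun i => deg X' r i < k) := by
    rw [Finset.disjoint_filter]
    exact fun i _ hi => not_lt.mpr (hin i hi)
  have hcount : M + 1 + qCount X' k r ≤ qCount X k r := by
    rw [← hle_card, qCount, ← Finset.card_union_of_disjoint hdisj]
    refine Finset.card_le_card fun i hi => ?_
    simp only [mem_union, mem_filter, mem_univ, true_and] at hi ⊢
    by_cases h : i.val ≤ M
    · exact hout i h
    · exact (hmono i (not_le.mp h)).trans_lt (hi.resolve_left h)
  refine ⟨X, X', ?_, ?_⟩
  · rw [hamming, Finset.card_eq_one]
    refine ⟨z, Finset.ext fun i => ?_⟩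
    simp only [mem_filter, mem_univ, true_and, mem_singleton]
    refine ⟨fun h => by_contra fun hi => h (hXX' i hi), ?_⟩
    rintro rfl h
    rw [hXz, hXz'] at h
    rw [h, norm_zero] at hq
    linarith
  · refine le_trans ?_ (le_abs_self _)
    have h : ((M : ℤ) + 1 + qCount X' k r ≤ qCount X k r) := by exact_mod_cast hcount
    rw [hM] at h
    push_cast at h
    linarith
end
end

section
/- In dimension d = 1, for every threshold k ≥ 1, radius r > 0, and database size N ≥ 2k + 1, the global sensitivity of the outlier-count query equals 2k + 1: for all databases X, X' of size N in ℝ with H(X,X') = 1 one has |q_count(X,k,r) − q_count(X',k,r)| ≤ 2k + 1, and there exists such a pair attaining the value 2k + 1. -/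
open Finset
open scoped Classical

noncomputable section

/-- In dimension one, the degree can be computed from the single coordinate of each record. -/
lemma deg_dim_one {N : ℕ} (X : Fin N → Pt 1) (r : ℝ) (i : Fin N) :
    deg X r i = (univ.filter fun j => j ≠ i ∧ |X j 0 - X i 0| ≤ r).card := by
  simp [deg, EuclideanSpace.norm_eq, Real.sqrt_sq_eq_abs]

/-- A set of outliers at pairwise distance at most `r` has at most `k` elements. -/
lemma card_le_of_outliers_close {N d : ℕ} (X : Fin N → Pt d) (k : ℕ) (r : ℝ)
    (S : Finset (Fin N)) (hout : ∀ i ∈ S, deg X r i < k)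
    (hclose : ∀ i ∈ S, ∀ j ∈ S, ‖X j - X i‖ ≤ r) : S.card ≤ k := by
  obtain rfl | ⟨i, hi⟩ := S.eq_empty_or_nonempty
  · simp
  have hsub : S.erase i ⊆ univ.filter fun j => j ≠ i ∧ ‖X j - X i‖ ≤ r := fun j hj => by
    rw [mem_erase] at hj
    simpa using ⟨hj.1, hclose i hi j hj.2⟩
  have hle := card_le_card hsub
  have hlt := hout i hi
  rw [card_erase_of_mem hi] at hle
  unfold deg at hlt
  omega

/-- A record that stops being an outlier when record `a` moves is close to its new position. -/
lemma norm_sub_le_of_outlier_of_not_outlier {N d : ℕ} {X X' : Fin N → Pt d} {k : ℕ} {r : ℝ}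
    {a i : Fin N} (h : ∀ j, j ≠ a → X j = X' j) (hia : i ≠ a)
    (hi : deg X r i < k) (hi' : ¬ deg X' r i < k) : ‖X' a - X i‖ ≤ r := by
  by_contra hfar
  refine hi' (lt_of_le_of_lt (card_le_card fun j hj => ?_) hi)
  simp only [mem_filter, mem_univ, true_and] at hj ⊢
  rw [← h i hia] at hj
  have hja : j ≠ a := by
    rintro rfl
    exact hfar hj.2
  rwa [h j hja]

/-- Moving a single record on the line lowers the outlier count by at most `2k + 1`. -/
lemma qCount_le_add_of_eq_off {N : ℕ} {X X' : Fin N → Pt 1} (k : ℕ) (r : ℝ) {a : Fin N}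
    (h : ∀ j, j ≠ a → X j = X' j) : qCount X k r ≤ qCount X' k r + (2 * k + 1) := by
  have norm_eq : ∀ x : Pt 1, ‖x‖ = |x 0| := fun x => by
    simp [EuclideanSpace.norm_eq, Real.sqrt_sq_eq_abs]
  let L := univ.filter fun i => deg X r i < k ∧ X' a 0 - r ≤ X i 0 ∧ X i 0 ≤ X' a 0
  let R := univ.filter fun i => deg X r i < k ∧ X' a 0 ≤ X i 0 ∧ X i 0 ≤ X' a 0 + r
  have hL : L.card ≤ k := by
    refine card_le_of_outliers_close X k r L (fun i hi => (mem_filter.1 hi).2.1) ?_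
    intro i hi j hj
    obtain ⟨-, -, hi₁, hi₂⟩ := mem_filter.1 hi
    obtain ⟨-, -, hj₁, hj₂⟩ := mem_filter.1 hj
    rw [norm_eq, PiLp.sub_apply, abs_le]
    constructor <;> linarith
  have hR : R.card ≤ k := by
    refine card_le_of_outliers_close X k r R (fun i hi => (mem_filter.1 hi).2.1) ?_
    intro i hi j hj
    obtain ⟨-, -, hi₁, hi₂⟩ := mem_filter.1 hi
    obtain ⟨-, -, hj₁, hj₂⟩ := mem_filter.1 hj
    rw [norm_eq, PiLp.sub_apply, abs_le]
    constructor <;> linarith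
  have hsub : (univ.filter fun i => deg X r i < k) ⊆
      (univ.filter fun i => deg X' r i < k) ∪ ({a} ∪ (L ∪ R)) := by
    intro i hi
    have hi : deg X r i < k := (mem_filter.1 hi).2
    by_cases hi' : deg X' r i < k
    · simp [hi']
    by_cases hia : i = a
    · simp [hia]
    have hclose := norm_sub_le_of_outlier_of_not_outlier h hia hi hi'
    rw [norm_eq, PiLp.sub_apply, abs_le] at hclose
    have hmem : i ∈ L ∪ R := by
      rw [mem_union, mem_filter, mem_filter]
      rcases le_total (X i 0) (X' a 0) with hle | hle
      · exact Or.inl ⟨mem_univ _, hi, by linarith, hle⟩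
      · exact Or.inr ⟨mem_univ _, hi, hle, by linarith⟩
    exact mem_union_right _ (mem_union_right _ hmem)
  have h₁ := card_le_card hsub
  have h₂ := card_union_le (univ.filter fun i => deg X' r i < k) ({a} ∪ (L ∪ R))
  have h₃ := card_union_le {a} (L ∪ R)
  have h₄ := card_union_le L R
  rw [card_singleton] at h₃
  unfold qCount
  omega

/-- Two clusters of `k` records at `-r` and `r`, record `0` at `t`, all other records at `10r`. -/
def twoClusters (N k : ℕ) (r t : ℝ) (i : Fin N) : Pt 1 :=
  EuclideanSpace.single 0 (if i.val = 0 then t else if i.val ≤ k then -r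
    else if i.val ≤ 2 * k then r else 10 * r)

lemma twoClusters_apply (N k : ℕ) (r t : ℝ) (i : Fin N) :
    twoClusters N k r t i 0 = if i.val = 0 then t else if i.val ≤ k then -r
      else if i.val ≤ 2 * k then r else 10 * r := by
  simp [twoClusters]

lemma card_filter_fin_Icc {N a b : ℕ} (hab : a ≤ b) (hb : b < N) :
    (univ.filter fun j : Fin N => a ≤ j.val ∧ j.val ≤ b).card = b + 1 - a := by
  have : (univ.filter fun j : Fin N => a ≤ j.val ∧ j.val ≤ b)
      = Icc ⟨a, hab.trans_lt hb⟩ ⟨b, hb⟩ := by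
    ext j
    simp [Fin.le_def]
  rw [this, Fin.card_Icc]

/-- With record `0` far away, it and both clusters consist of outliers. -/
lemma deg_twoClusters_far {N k : ℕ} (hk : 1 ≤ k) {r : ℝ} (hr : 0 < r) (hN : 2 * k + 1 ≤ N)
    {i : Fin N} (hi : i.val ≤ 2 * k) : deg (twoClusters N k r (-10 * r)) r i < k := by
  have key : ∀ a b : ℕ, a ≤ b → b < N → b + 1 - a = k → a ≤ i.val → i.val ≤ b →
      (∀ j : Fin N, j ≠ i →
        |twoClusters N k r (-10 * r) j 0 - twoClusters N k r (-10 * r) i 0| ≤ r →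
        a ≤ j.val ∧ j.val ≤ b) → deg (twoClusters N k r (-10 * r)) r i < k := by
    intro a b hab hb hcard hai hib hsub
    have hmem : i ∈ univ.filter fun j : Fin N => a ≤ j.val ∧ j.val ≤ b := by simp [hai, hib]
    rw [deg_dim_one]
    refine lt_of_le_of_lt (card_le_card (t := (univ.filter fun j : Fin N =>
      a ≤ j.val ∧ j.val ≤ b).erase i) fun j hj => ?_) ?_
    · simp only [mem_filter, mem_univ, true_and, mem_erase] at hj ⊢
      exact ⟨hj.1, hsub j hj.1 hj.2⟩
    · rw [card_erase_of_mem hmem, card_filter_fin_Icc hab hb]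
      omega
  rcases Nat.eq_zero_or_pos i.val with h0 | h0
  · rw [deg_dim_one, filter_false_of_mem, card_empty]
    · omega
    rintro j - ⟨hj, hd⟩
    have hj0 : j.val ≠ 0 := fun h => hj (Fin.ext (h.trans h0.symm))
    rw [twoClusters_apply, twoClusters_apply, abs_le, if_neg hj0, if_pos h0] at hd
    split_ifs at hd <;> linarith
  rcases le_or_gt i.val k with h1 | h1
  · refine key 1 k hk (by omega) (by omega) h0 h1 fun j hj hd => ?_
    rw [twoClusters_apply, twoClusters_apply, abs_le, if_neg h0.ne', if_pos h1] at hd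
    split_ifs at hd
    all_goals first | omega | (exfalso; linarith)
  · refine key (k + 1) (2 * k) (by omega) (by omega) (by omega) h1 hi fun j hj hd => ?_
    rw [twoClusters_apply, twoClusters_apply, abs_le, if_neg h0.ne', if_neg h1.not_ge,
      if_pos hi] at hd
    split_ifs at hd
    all_goals first | omega | (exfalso; linarith)

/-- With record `0` at the midpoint, neither it nor any cluster record is an outlier. -/
lemma le_deg_twoClusters_mid {N k : ℕ} (hk : 1 ≤ k) {r : ℝ} (hr : 0 < r) (hN : 2 * k + 1 ≤ N)
    {i : Fin N} (hi : i.val ≤ 2 * k) : k ≤ deg (twoClusters N k r 0) r i := by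
  rw [deg_dim_one]
  rcases le_or_gt i.val k with h1 | h1
  · have hmem : i ∈ univ.filter fun j : Fin N => 0 ≤ j.val ∧ j.val ≤ k := by simp [h1]
    have hcard := card_erase_of_mem hmem
    rw [card_filter_fin_Icc (Nat.zero_le k) (by omega)] at hcard
    refine le_trans (by omega) (card_le_card (s := (univ.filter fun j : Fin N =>
      0 ≤ j.val ∧ j.val ≤ k).erase i) fun j hj => ?_)
    simp only [mem_filter, mem_univ, true_and, mem_erase] at hj ⊢
    refine ⟨hj.1, ?_⟩
    rw [twoClusters_apply, twoClusters_apply, abs_le, if_pos h1, if_pos hj.2.2]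
    split_ifs <;> constructor <;> linarith
  · let C := univ.filter fun j : Fin N => k + 1 ≤ j.val ∧ j.val ≤ 2 * k
    have hC : C.card = k := by
      rw [card_filter_fin_Icc (by omega) (by omega)]
      omega
    have hmem : i ∈ C := by simpa [C] using ⟨h1, hi⟩
    have hzero : (⟨0, by omega⟩ : Fin N) ∉ C.erase i := by simp [C]
    have hcard := card_insert_of_notMem hzero
    rw [card_erase_of_mem hmem, hC] at hcard
    refine le_trans (by omega) (card_le_card (s := insert ⟨0, by omega⟩ (C.erase i))
      fun j hj => ?_)
    simp only [mem_filter, mem_univ, true_and, mem_erase, mem_insert, C] at hj ⊢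
    have hi0 : i.val ≠ 0 := by omega
    rw [twoClusters_apply, twoClusters_apply, abs_le, if_neg hi0, if_neg h1.not_ge, if_pos hi]
    rcases hj with rfl | ⟨hji, hj1, hj2⟩
    · refine ⟨fun h => hi0 (congrArg Fin.val h).symm, ?_⟩
      rw [if_pos rfl]
      constructor <;> linarith
    · rw [if_neg (by omega), if_neg (by omega), if_pos hj2]
      refine ⟨hji, ?_⟩
      constructor <;> linarith

/-- The records away from the clusters do not see record `0` in either position. -/
lemma deg_twoClusters_rest {N k : ℕ} {r : ℝ} (hr : 0 < r) {i : Fin N} (hi : 2 * k < i.val) :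
    deg (twoClusters N k r (-10 * r)) r i = deg (twoClusters N k r 0) r i := by
  rw [deg_dim_one, deg_dim_one]
  congr 1
  refine filter_congr fun j _ => and_congr_right fun _ => ?_
  have hi0 : i.val ≠ 0 := by omega
  have hik : ¬ i.val ≤ k := by omega
  rw [twoClusters_apply, twoClusters_apply, twoClusters_apply, twoClusters_apply,
    if_neg hi0, if_neg hi0, if_neg hik, if_neg hi.not_ge]
  by_cases hj : j.val = 0
  · rw [if_pos hj, if_pos hj, abs_le, abs_le]
    constructor <;> rintro ⟨h₁, h₂⟩ <;> linarith
  · rw [if_neg hj, if_neg hj]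

lemma qCount_twoClusters {N k : ℕ} (hk : 1 ≤ k) {r : ℝ} (hr : 0 < r) (hN : 2 * k + 1 ≤ N) :
    qCount (twoClusters N k r (-10 * r)) k r
      = qCount (twoClusters N k r 0) k r + (2 * k + 1) := by
  have hcard := card_filter_fin_Icc (N := N) (Nat.zero_le (2 * k)) (by omega)
  rw [Nat.sub_zero] at hcard
  unfold qCount
  rw [← hcard, ← card_union_of_disjoint]
  · congr 1
    ext i
    simp only [mem_filter, mem_univ, true_and, mem_union]
    rcases le_or_gt i.val (2 * k) with hi | hi
    · exact iff_of_true (deg_twoClusters_far hk hr hN hi) (Or.inr ⟨Nat.zero_le _, hi⟩)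
    · rw [deg_twoClusters_rest hr hi, or_iff_left fun h => hi.not_ge h.2]
  · refine disjoint_left.2 fun i hi hi' => ?_
    simp only [mem_filter, mem_univ, true_and] at hi hi'
    exact (le_deg_twoClusters_mid hk hr hN hi'.2).not_gt hi

lemma hamming_twoClusters {N k : ℕ} {r s t : ℝ} (hst : s ≠ t) (hN : 0 < N) :
    hamming (twoClusters N k r s) (twoClusters N k r t) = 1 := by
  refine card_eq_one.2 ⟨⟨0, hN⟩, ?_⟩
  ext i
  simp only [mem_filter, mem_univ, true_and, mem_singleton, Fin.ext_iff]
  by_cases hi : i.val = 0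
  · refine iff_of_true (fun h => hst ?_) hi
    have := congrArg (fun x : Pt 1 => x 0) h
    simpa [twoClusters_apply, hi] using this
  · simp [twoClusters, hi]

/-- In dimension `d = 1`, the global sensitivity of the outlier-count query equals `2k + 1`:
every neighboring pair differs by at most `2k + 1`, and some pair attains this value. -/
theorem global_sensitivity_dim_one
    (N k : ℕ) (hk : 1 ≤ k) (r : ℝ) (hr : 0 < r) (hN : 2 * k + 1 ≤ N) :
    (∀ X X' : Fin N → Pt 1, hamming X X' = 1 →
      |(qCount X k r : ℤ) - (qCount X' k r : ℤ)| ≤ 2 * k + 1) ∧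
    (∃ X X' : Fin N → Pt 1, hamming X X' = 1 ∧
      |(qCount X k r : ℤ) - (qCount X' k r : ℤ)| = 2 * k + 1) := by
  constructor
  · intro X X' h
    obtain ⟨a, ha⟩ := card_eq_one.1 h
    have heq : ∀ j, j ≠ a → X j = X' j := fun j hj => by
      by_contra hne
      have hmem : j ∈ univ.filter fun i => X i ≠ X' i := by simpa using hne
      rw [ha, mem_singleton] at hmem
      exact hj hmem
    have h₁ := qCount_le_add_of_eq_off k r heq
    have h₂ := qCount_le_add_of_eq_off k r fun j hj => (heq j hj).symm
    rw [abs_le]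
    constructor <;> omega
  · refine ⟨twoClusters N k r (-10 * r), twoClusters N k r 0,
      hamming_twoClusters (by linarith) (by omega), ?_⟩
    rw [qCount_twoClusters hk hr hN]
    push_cast
    rw [add_sub_cancel_left, abs_of_nonneg (by positivity)]
end
end

section
/- For every database X of size N in ℝ^d and every database X' of size N with Hamming distance H(X,X') = 1, |q_count(X,k,r) − q_count(X',k,r)| ≤ max( max_{i} |CV(X, X i, k, r)| , sup_{x ∈ ℝ^d} |CV(X, x, k−1, r)| ) + 1, where the first maximum ranges over all record indices i of X. (Upper bound on the local sensitivity of the outlier-count query.) -/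
open Finset
open scoped Classical

noncomputable section

/-- `V(X,m,r)`: the set of record indices of degree exactly `m` (empty for `m < 0`). -/
def Vset {N d : ℕ} (X : Fin N → Pt d) (r : ℝ) (m : ℤ) : Finset (Fin N) :=
  univ.filter fun i => (deg X r i : ℤ) = m

/-- `CV(X,x,m,r)`: the set of degree-`m` record indices within distance `r` of `x`
(empty for `m < 0`). -/
def CV {N d : ℕ} (X : Fin N → Pt d) (x : Pt d) (m : ℤ) (r : ℝ) : Finset (Fin N) :=
  (Vset X r m).filter fun i => ‖X i - x‖ ≤ r

lemma deg_le_of_eq_off {N d : ℕ} {X X' : Fin N → Pt d} {p j : Fin N} {r : ℝ}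
    (hX : ∀ i, i ≠ p → X i = X' i) (hj : j ≠ p) : deg X r j ≤ deg X' r j + 1 := by
  unfold deg
  refine (card_le_card (t := insert p _) ?_).trans (card_insert_le p _)
  intro i hi
  by_cases hip : i = p
  · simp [hip]
  · simpa [hip, hX i hip, hX j hj] using hi

/-- A record other than the replaced one can only lose a neighbor if the replaced record was
within distance `r` of it. -/
lemma norm_sub_le_of_deg_lt {N d : ℕ} {X X' : Fin N → Pt d} {p j : Fin N} {r : ℝ}
    (hX : ∀ i, i ≠ p → X i = X' i) (hj : j ≠ p) (hlt : deg X' r j < deg X r j) :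
    ‖X j - X p‖ ≤ r := by
  by_contra h
  refine hlt.not_ge (card_le_card fun i hi => ?_)
  by_cases hip : i = p
  · subst hip
    rw [norm_sub_rev] at h
    simp [h] at hi
  · simpa [hX i hip, hX j hj] using hi

lemma mem_CV {N d : ℕ} {X : Fin N → Pt d} {x : Pt d} {m : ℤ} {r : ℝ} {i : Fin N} :
    i ∈ CV X x m r ↔ (deg X r i : ℤ) = m ∧ ‖X i - x‖ ≤ r := by
  simp [CV, Vset]

/-- If every outlier of `X` other than `p` that is not an outlier of `Y` lies in `C`, then the
outlier count drops by at most `|C| + 1` from `X` to `Y`. -/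
lemma qCount_le_add {N d k : ℕ} {X Y : Fin N → Pt d} {r : ℝ} {p : Fin N} {C : Finset (Fin N)}
    (hC : ∀ j, j ≠ p → deg X r j < k → k ≤ deg Y r j → j ∈ C) :
    qCount X k r ≤ qCount Y k r + (C.card + 1) := by
  unfold qCount
  refine (card_le_card (t := (univ.filter fun i => deg Y r i < k) ∪ insert p C) ?_).trans
    ((card_union_le _ _).trans (Nat.add_le_add_left (card_insert_le p C) _))
  intro j hj
  simp only [mem_filter, mem_univ, true_and, mem_union, mem_insert] at hj ⊢
  by_cases hjp : j = p
  · exact Or.inr (Or.inl hjp)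
  · rcases lt_or_ge (deg Y r j) k with h | h
    · exact Or.inl h
    · exact Or.inr (Or.inr (hC j hjp hj h))

/-- Upper bound on the local sensitivity of the outlier-count query:
for any neighbor `X'` of `X`, the change in the outlier count is at most
`max( max_i |CV(X, X i, k, r)|, sup_{x ∈ ℝ^d} |CV(X, x, k−1, r)| ) + 1`. -/
theorem local_sensitivity_upper_bound
    (d N k : ℕ) (hd : 1 ≤ d) (hk : 1 ≤ k) (r : ℝ) (hr : 0 < r)
    (X X' : Fin N → Pt d) (hH : hamming X X' = 1) :
    |(qCount X k r : ℤ) - (qCount X' k r : ℤ)| ≤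
      max ((((univ : Finset (Fin N)).sup fun i => (CV X (X i) (k : ℤ) r).card : ℕ)) : ℤ)
        ((sSup {n : ℕ | ∃ x : Pt d, n = (CV X x ((k : ℤ) - 1) r).card} : ℕ) : ℤ) + 1 := by
  obtain ⟨p, hp⟩ := card_eq_one.mp hH
  have hX : ∀ i, i ≠ p → X i = X' i := fun i hi => by
    by_contra hne
    have hmem : i ∈ univ.filter fun i => X i ≠ X' i := by simpa using hne
    rw [hp, mem_singleton] at hmem
    exact hi hmem
  have hX' : ∀ i, i ≠ p → X' i = X i := fun i hi => (hX i hi).symm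
  have hloss : qCount X k r ≤ qCount X' k r + ((CV X (X' p) ((k : ℤ) - 1) r).card + 1) :=
    qCount_le_add fun j hj hlt hge => by
      have hdeg := deg_le_of_eq_off (r := r) hX' hj
      have hnear := norm_sub_le_of_deg_lt (r := r) hX' hj (by omega)
      exact mem_CV.mpr ⟨by omega, by rwa [hX j hj]⟩
  have hgain : qCount X' k r ≤ qCount X k r + ((CV X (X p) (k : ℤ) r).card + 1) :=
    qCount_le_add fun j hj hlt hge => by
      have hdeg := deg_le_of_eq_off (r := r) hX hj
      exact mem_CV.mpr ⟨by omega, norm_sub_le_of_deg_lt hX hj (by omega)⟩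
  have hmax : (CV X (X p) (k : ℤ) r).card ≤
      (univ : Finset (Fin N)).sup fun i => (CV X (X i) (k : ℤ) r).card :=
    le_sup (f := fun i => (CV X (X i) (k : ℤ) r).card) (mem_univ p)
  have hsup : (CV X (X' p) ((k : ℤ) - 1) r).card ≤
      sSup {n : ℕ | ∃ x : Pt d, n = (CV X x ((k : ℤ) - 1) r).card} := by
    refine le_csSup ⟨N, ?_⟩ ⟨X' p, rfl⟩
    rintro _ ⟨x, rfl⟩
    exact (card_le_univ _).trans_eq (Fintype.card_fin N)
  rw [abs_le]
  constructor <;> omega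
end
end

section
/- Let X and X₁ be databases of size N in ℝ^d with Hamming distance H(X,X₁) = 1, and let i₀ be the unique index with X i₀ ≠ X₁ i₀. Then for every m ≥ 0, V(X₁,m,r) ⊆ V(X,m−1,r) ∪ V(X,m,r) ∪ V(X,m+1,r) ∪ {i₀} (where V(X,m−1,r) is empty for m = 0). -/
open Finset
open scoped Classical

noncomputable section

/-- Off the only record in which two databases differ, degrees grow by at most one. -/
theorem deg_le_deg_add_one {N d : ℕ} {X Y : Fin N → Pt d} {i₀ i : Fin N}
    (h : ∀ j, j ≠ i₀ → X j = Y j) (hi : i ≠ i₀) (r : ℝ) : deg X r i ≤ deg Y r i + 1 := by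
  refine le_trans (card_le_card fun j hj => ?_) (card_insert_le i₀ _)
  by_cases hj₀ : j = i₀
  · exact mem_insert.2 (Or.inl hj₀)
  · simpa [hj₀, h j hj₀, h i hi] using hj

/-- Databases at Hamming distance one agree off any record in which they differ. -/
theorem eq_of_hamming_eq_one {N d : ℕ} {X Y : Fin N → Pt d} (hH : hamming X Y = 1)
    {i₀ : Fin N} (hi₀ : X i₀ ≠ Y i₀) (j : Fin N) (hj : j ≠ i₀) : X j = Y j := by
  by_contra hne
  exact hj (card_le_one.1 hH.le j (by simpa using hne) i₀ (by simpa using hi₀))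

/-- If `X₁` differs from `X` in exactly the record `i₀`, then every record of degree `m`
in `X₁` either has degree `m−1`, `m`, or `m+1` in `X`, or is `i₀` itself. -/
theorem Vset_neighbor_subset
    (d N : ℕ) (hd : 1 ≤ d) (r : ℝ) (hr : 0 < r)
    (X X₁ : Fin N → Pt d) (hH : hamming X X₁ = 1)
    (i₀ : Fin N) (hi₀ : X i₀ ≠ X₁ i₀) (m : ℕ) :
    Vset X₁ r (m : ℤ) ⊆
      Vset X r ((m : ℤ) - 1) ∪ Vset X r (m : ℤ) ∪ Vset X r ((m : ℤ) + 1) ∪ {i₀} := by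
  intro i hi
  by_cases hii : i = i₀
  · simp [hii]
  · have hagree := eq_of_hamming_eq_one hH hi₀
    have hle := deg_le_deg_add_one hagree hii r
    have hge := deg_le_deg_add_one (fun j hj => (hagree j hj).symm) hii r
    simp only [Vset, mem_union, mem_filter, mem_univ, true_and, mem_singleton] at hi ⊢
    omega
end
end

section
/- Let t ≥ 0 be an integer, and let X and X_t be databases of size N in ℝ^d with Hamming distance H(X,X_t) = t. Then for every x ∈ ℝ^d and every threshold k ≥ 1, |CV(X_t, x, k, r)| ≤ |⋃_{j ≥ 0, |j−k| ≤ t} CV(X, x, j, r)| + t. -/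
open Finset
open scoped Classical

noncomputable section

/-- The union `⋃_{j ≥ 0, |j−m| ≤ t} CV(X,x,j,r)` (terms with `j < 0` are empty). -/
def CVUnion {N d : ℕ} (X : Fin N → Pt d) (x : Pt d) (m : ℤ) (t : ℕ) (r : ℝ) :
    Finset (Fin N) :=
  (Finset.Icc (m - t) (m + t)).biUnion fun j => CV X x j r

/-- `C^{(t)}(X,x,m,r) = |⋃_{j ≥ 0, |j−m| ≤ t} CV(X,x,j,r)|`. -/
def Ct {N d : ℕ} (X : Fin N → Pt d) (x : Pt d) (m : ℤ) (t : ℕ) (r : ℝ) : ℕ :=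
  (CVUnion X x m t r).card

theorem hamming_comm {N d : ℕ} (X X' : Fin N → Pt d) : hamming X X' = hamming X' X := by
  simp only [hamming, ne_comm]

/-- Changing `t` records other than `i` raises the degree of record `i` by at most `t`. -/
theorem deg_le_deg_add_hamming {N d : ℕ} (X X' : Fin N → Pt d) (r : ℝ) {i : Fin N}
    (hi : X i = X' i) : deg X' r i ≤ deg X r i + hamming X X' := by
  refine (card_le_card fun j hj => ?_).trans (card_union_le _ _)
  simp only [mem_union, mem_filter, mem_univ, true_and] at hj ⊢
  by_cases h : X j = X' j
  · exact Or.inl (by rwa [h, hi])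
  · exact Or.inr h

/-- If `H(X,X_t) = t`, then `|CV(X_t,x,k,r)| ≤ |⋃_{j ≥ 0, |j−k| ≤ t} CV(X,x,j,r)| + t`. -/
theorem CV_card_le_of_hamming
    (d N k t : ℕ) (hd : 1 ≤ d) (hk : 1 ≤ k) (r : ℝ) (hr : 0 < r)
    (X Xt : Fin N → Pt d) (hH : hamming X Xt = t) (x : Pt d) :
    (CV Xt x (k : ℤ) r).card ≤ Ct X x (k : ℤ) t r + t := by
  subst hH
  refine (card_le_card fun i hi => ?_).trans (card_union_le _ _)
  simp only [CV, CVUnion, Vset, mem_union, mem_biUnion, mem_Icc, mem_filter, mem_univ,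
    true_and] at hi ⊢
  by_cases h : X i = Xt i
  · have h₁ := deg_le_deg_add_hamming X Xt r h
    have h₂ := deg_le_deg_add_hamming Xt X r h.symm
    rw [hamming_comm Xt X] at h₂
    exact Or.inl ⟨deg X r i, by omega, rfl, h ▸ hi.2⟩
  · exact Or.inr h
end
end
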